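/- Let K ⊂ ℝ^d be a compact set, let F : P_2(K) → ℝ be lower semicontinuous and strictly convex, let τ > 0, and let μ_k ∈ P_2(K). Then the functional μ ↦ SW_2²(μ, μ_k)/(2τ) + F(μ) has a unique minimizer over P_2(K). -/

import Mathlib

open MeasureTheory ENNReal Metric Filter
open scoped RealInnerProductSpace NNReal

noncomputable section

/-- `ℝ^d` as a Euclidean space. -/
abbrev Ed (d : ℕ) : Type := EuclideanSpace ℝ (Fin d)

/-- `π` is a coupling of `μ` and `ν`. -/
def IsCoupling {E : Type*} [MeasurableSpace E] (π : Measure (E × E)) (μ ν : Measure E) : Prop :=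
  π.map Prod.fst = μ ∧ π.map Prod.snd = ν

/-- Squared 2-Wasserstein distance. -/
def W2sq {E : Type*} [MeasurableSpace E] [NormedAddCommGroup E] (μ ν : Measure E) : ℝ≥0∞ :=
  ⨅ (π : Measure (E × E)) (_ : IsCoupling π μ ν), ∫⁻ p, (‖p.1 - p.2‖₊ : ℝ≥0∞) ^ 2 ∂π

/-- The uniform probability measure on the unit sphere `S^{d-1}`. -/
def unifSphere (d : ℕ) : Measure (sphere (0 : Ed d) 1) :=
  ((volume : Measure (Ed d)).toSphere Set.univ)⁻¹ • (volume : Measure (Ed d)).toSphere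

/-- Projection `P^θ(x) = ⟨x, θ⟩`. -/
def proj {d : ℕ} (θ : Ed d) (x : Ed d) : ℝ := ⟪x, θ⟫

/-- Squared Sliced-Wasserstein distance. -/
def SW2sq {d : ℕ} (μ ν : Measure (Ed d)) : ℝ≥0∞ :=
  ∫⁻ θ : sphere (0 : Ed d) 1,
    W2sq (μ.map (proj (θ : Ed d))) (ν.map (proj (θ : Ed d))) ∂(unifSphere d)

/-- Sliced-Wasserstein distance. -/
def SW2 {d : ℕ} (μ ν : Measure (Ed d)) : ℝ := Real.sqrt (SW2sq μ ν).toReal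

/-- Finite second moment. -/
def FiniteSecondMoment {d : ℕ} (μ : Measure (Ed d)) : Prop :=
  ∫⁻ x, (‖x‖₊ : ℝ≥0∞) ^ 2 ∂μ < ∞

/-- `μ ∈ P_2(K)`: probability measure supported in `K` with finite second moment. -/
def MemP2 {d : ℕ} (K : Set (Ed d)) (μ : Measure (Ed d)) : Prop :=
  IsProbabilityMeasure μ ∧ μ Kᶜ = 0 ∧ FiniteSecondMoment μ

lemma isCompact_supp {E : Type*} [MeasurableSpace E] [TopologicalSpace E] [T2Space E]
    [NormalSpace E] [BorelSpace E] {K : Set E} (hK : IsCompact K) :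
    IsCompact {μ : ProbabilityMeasure E | μ.toMeasure Kᶜ = 0} := by
  have := isCompact_setOfPred_probabilityMeasure_mass_eq_compl_isCompact_le (E := E)
    (u := fun _ => 0) (K := fun _ => K) tendsto_const_nhds (fun _ => hK) (Or.inl inferInstance)
  convert this using 2 with μ
  simp [ProbabilityMeasure.null_iff_toMeasure_null]

lemma isClosed_cost {B : Set ℝ} (hB : IsCompact B) (b : ℝ≥0∞) :
    IsCompact {π : ProbabilityMeasure (ℝ × ℝ) | π.toMeasure (B ×ˢ B)ᶜ = 0 ∧
      ∫⁻ p, (‖p.1 - p.2‖₊ : ℝ≥0∞) ^ 2 ∂π.toMeasure ≤ b} := by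
  obtain ⟨M, hM⟩ := (hB.prod hB).exists_bound_of_continuousOn
    (f := fun p : ℝ × ℝ => ‖p.1 - p.2‖ ^ 2) (by fun_prop)
  let N : ℝ≥0 := M.toNNReal
  let g : ℝ × ℝ → ℝ≥0 := fun p => min (‖p.1 - p.2‖₊ ^ 2) N
  let h : BoundedContinuousFunction (ℝ × ℝ) ℝ≥0 :=
    BoundedContinuousFunction.mkOfBound ⟨g, by fun_prop⟩ N (by
      intro x y
      have hx : (g x : ℝ) ≤ N := by exact_mod_cast min_le_right _ _
      have hy : (g y : ℝ) ≤ N := by exact_mod_cast min_le_right _ _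
      simp only [ContinuousMap.coe_mk, NNReal.dist_eq, abs_le]
      constructor <;> linarith [(g x).2, (g y).2, NNReal.coe_nonneg (g x), NNReal.coe_nonneg (g y)])
  have hc := ProbabilityMeasure.continuous_lintegral_boundedContinuousFunction h
  have hcl : IsClosed {π : ProbabilityMeasure (ℝ × ℝ) | ∫⁻ x, h x ∂π.toMeasure ≤ b} :=
    isClosed_le hc continuous_const
  convert (isCompact_supp (hB.prod hB)).inter_right hcl using 1
  ext π
  simp only [Set.mem_setOf_eq, Set.mem_inter_iff]
  refine and_congr_right fun h0 => ?_
  have : ∫⁻ p, (‖p.1 - p.2‖₊ : ℝ≥0∞) ^ 2 ∂π.toMeasure = ∫⁻ x, h x ∂π.toMeasure := by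
    apply lintegral_congr_ae
    have : ∀ᵐ p ∂π.toMeasure, p ∈ B ×ˢ B := h0
    filter_upwards [this] with p hp
    have h1 := hM p hp
    have : ‖p.1 - p.2‖₊ ^ 2 ≤ N := by
      rw [← NNReal.coe_le_coe]
      push_cast
      refine le_trans ?_ (Real.le_coe_toNNReal M)
      simpa using h1
    have h2 : h p = ‖p.1 - p.2‖₊ ^ 2 := min_eq_left this
    rw [h2]; push_cast; rfl
  rw [this]

lemma coupling_supp {B : Set ℝ} (hB : IsCompact B) {π : Measure (ℝ × ℝ)} {μ ν : Measure ℝ}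
    (h : IsCoupling π μ ν) (hμ : μ Bᶜ = 0) (hν : ν Bᶜ = 0) : π (B ×ˢ B)ᶜ = 0 := by
  rw [← h.1, Measure.map_apply measurable_fst hB.measurableSet.compl] at hμ
  rw [← h.2, Measure.map_apply measurable_snd hB.measurableSet.compl] at hν
  refine measure_mono_null ?_ (measure_union_null hμ hν)
  intro p hp
  simp only [Set.mem_compl_iff, Set.mem_prod, Set.mem_union, Set.mem_preimage] at *
  tauto

lemma W2_lsc {B : Set ℝ} (hB : IsCompact B) {X : Type*} [TopologicalSpace X]
    (f g : X → ProbabilityMeasure ℝ) (hf : Continuous f) (hg : Continuous g)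
    (hfB : ∀ x, (f x).toMeasure Bᶜ = 0) (hgB : ∀ x, (g x).toMeasure Bᶜ = 0) :
    LowerSemicontinuous fun x => W2sq (f x).toMeasure (g x).toMeasure := by
  rw [lowerSemicontinuous_iff_isClosed_preimage]
  intro a
  let m : ProbabilityMeasure (ℝ × ℝ) → ProbabilityMeasure ℝ × ProbabilityMeasure ℝ := fun π =>
    (π.map continuous_fst.measurable.aemeasurable, π.map continuous_snd.measurable.aemeasurable)
  have hm : Continuous m := (ProbabilityMeasure.continuous_map continuous_fst).prodMk
    (ProbabilityMeasure.continuous_map continuous_snd)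
  have : (fun x => W2sq (f x).toMeasure (g x).toMeasure) ⁻¹' Set.Iic a =
      ⋂ b ∈ Set.Ioi a, (fun x => (f x, g x)) ⁻¹' (m ''
        {π : ProbabilityMeasure (ℝ × ℝ) | π.toMeasure (B ×ˢ B)ᶜ = 0 ∧
          ∫⁻ p, (‖p.1 - p.2‖₊ : ℝ≥0∞) ^ 2 ∂π.toMeasure ≤ b}) := by
    ext x
    simp only [Set.mem_preimage, Set.mem_Iic, Set.mem_iInter, Set.mem_Ioi]
    constructor
    · intro hx b hb
      have hlt := hx.trans_lt hb
      simp only [W2sq, iInf_lt_iff] at hlt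
      obtain ⟨π, hπ, hlt⟩ := hlt
      have hp : IsProbabilityMeasure π := by
        constructor
        have : (π.map Prod.fst) Set.univ = 1 := by rw [hπ.1]; simp
        rwa [Measure.map_apply measurable_fst MeasurableSet.univ, Set.preimage_univ] at this
      refine ⟨⟨π, hp⟩, ⟨coupling_supp hB hπ (hfB x) (hgB x), hlt.le⟩, ?_⟩
      ext1
      · exact Subtype.ext hπ.1
      · exact Subtype.ext hπ.2
    · intro hx
      refine le_of_forall_gt_imp_ge_of_dense fun b hb => ?_
      obtain ⟨π, ⟨_, hπ⟩, he⟩ := hx b hb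
      have h1 := congrArg (fun q => (q.1 : ProbabilityMeasure ℝ).toMeasure) he
      have h2 := congrArg (fun q => (q.2 : ProbabilityMeasure ℝ).toMeasure) he
      exact (iInf₂_le π.toMeasure ⟨h1, h2⟩).trans hπ
  rw [this]
  refine isClosed_biInter fun b _ => ?_
  exact (((isClosed_cost hB b).image hm).isClosed).preimage (hf.prodMk hg)

lemma continuous_proj {d : ℕ} (θ : Ed d) : Continuous (proj θ) := by
  unfold proj; fun_prop

/-- Projected probability measure. -/
def pm {d : ℕ} (μ : ProbabilityMeasure (Ed d)) (θ : Ed d) : ProbabilityMeasure ℝ :=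
  μ.map (continuous_proj θ).measurable.aemeasurable

lemma pm_cont_left {d : ℕ} (θ : Ed d) : Continuous fun μ => pm μ θ :=
  ProbabilityMeasure.continuous_map (continuous_proj θ)

lemma pm_cont_right {d : ℕ} (μ : ProbabilityMeasure (Ed d)) : Continuous fun θ => pm μ θ := by
  rw [ProbabilityMeasure.continuous_iff_forall_continuous_integral]
  intro f
  have : ∀ θ, ∫ ω, f ω ∂(pm μ θ).toMeasure = ∫ x, f (proj θ x) ∂μ.toMeasure := fun θ =>
    integral_map (continuous_proj θ).measurable.aemeasurable
      f.continuous.aestronglyMeasurable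
  simp only [this]
  refine continuous_of_dominated (bound := fun _ => ‖f‖) ?_ ?_ ?_ ?_
  · intro θ
    exact (f.continuous.comp (continuous_proj θ)).aestronglyMeasurable
  · intro θ
    exact Eventually.of_forall fun x => f.norm_coe_le_norm _
  · exact integrable_const _
  · refine Eventually.of_forall fun x => f.continuous.comp ?_
    unfold proj; fun_prop

lemma exists_box {d : ℕ} {K : Set (Ed d)} (hK : IsCompact K) :
    ∃ R : ℝ, ∀ μ : ProbabilityMeasure (Ed d), μ.toMeasure Kᶜ = 0 →
      ∀ θ : sphere (0 : Ed d) 1, (pm μ θ).toMeasure (Set.Icc (-R) R)ᶜ = 0 := by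
  obtain ⟨R, hR⟩ := hK.exists_bound_of_continuousOn (f := fun x => x) continuousOn_id
  refine ⟨R, fun μ hμ θ => ?_⟩
  change (μ.toMeasure.map _) _ = 0
  rw [Measure.map_apply (continuous_proj _).measurable measurableSet_Icc.compl]
  refine measure_mono_null ?_ hμ
  intro x hx hxK
  apply hx
  have h1 : |proj (θ : Ed d) x| ≤ ‖x‖ * ‖(θ : Ed d)‖ := abs_real_inner_le_norm x θ
  have h2 : ‖(θ : Ed d)‖ = 1 := by simpa using θ.2
  rw [h2, mul_one] at h1
  exact abs_le.1 (h1.trans (hR x hxK))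

lemma W2_bound {R : ℝ} {μ ν : Measure ℝ} [IsProbabilityMeasure μ] [IsProbabilityMeasure ν]
    (hμ : μ (Set.Icc (-R) R)ᶜ = 0) (hν : ν (Set.Icc (-R) R)ᶜ = 0) :
    W2sq μ ν ≤ ENNReal.ofReal ((2 * R) ^ 2) := by
  have hc : IsCoupling (μ.prod ν) μ ν := by
    constructor
    · simp
    · simp
  have hs := coupling_supp isCompact_Icc hc hμ hν
  refine (iInf₂_le (f := fun (π : Measure (ℝ × ℝ)) (_ : IsCoupling π μ ν) =>
    ∫⁻ p, (‖p.1 - p.2‖₊ : ℝ≥0∞) ^ 2 ∂π) _ hc).trans ?_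
  have : ∀ᵐ p ∂(μ.prod ν), (‖p.1 - p.2‖₊ : ℝ≥0∞) ^ 2 ≤ ENNReal.ofReal ((2 * R) ^ 2) := by
    have : ∀ᵐ p ∂(μ.prod ν), p ∈ Set.Icc (-R) R ×ˢ Set.Icc (-R) R := hs
    filter_upwards [this] with p hp
    obtain ⟨⟨a1, a2⟩, b1, b2⟩ := hp
    have : (‖p.1 - p.2‖₊ : ℝ≥0∞) = ENNReal.ofReal ‖p.1 - p.2‖ := (ofReal_norm_eq_enorm _).symm
    rw [this, ← ENNReal.ofReal_pow (norm_nonneg _)]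
    apply ENNReal.ofReal_le_ofReal
    rw [Real.norm_eq_abs, sq_abs]
    apply sq_le_sq'  <;> linarith
  refine (lintegral_mono_ae this).trans ?_
  simp

lemma W2_convex {t : ℝ≥0} {μ ν ρ : Measure ℝ} (ht0 : 0 < t) (ht : t < 1) :
    W2sq (t • μ + (1 - t) • ν) ρ ≤ t * W2sq μ ρ + (1 - t : ℝ≥0) * W2sq ν ρ := by
  have h1 : ∀ (s : ℝ≥0) (α : Measure ℝ), 0 < s → (s : ℝ≥0∞) * W2sq α ρ =
      ⨅ π : {π : Measure (ℝ × ℝ) // IsCoupling π α ρ},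
        (s : ℝ≥0∞) * ∫⁻ p, (‖p.1 - p.2‖₊ : ℝ≥0∞) ^ 2 ∂π.1 := by
    intro s α hs
    rw [W2sq, iInf_subtype', ENNReal.mul_iInf_of_ne (by exact_mod_cast hs.ne') ENNReal.coe_ne_top]
  rw [h1 t μ ht0, h1 (1 - t) ν (tsub_pos_of_lt ht), ENNReal.iInf_add]
  refine le_iInf fun π₁ => ?_
  rw [ENNReal.add_iInf]
  refine le_iInf fun π₂ => ?_
  have hc : IsCoupling (t • π₁.1 + (1 - t) • π₂.1) (t • μ + (1 - t) • ν) ρ := by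
    constructor
    · rw [Measure.map_add _ _ measurable_fst, Measure.map_smul, Measure.map_smul,
        π₁.2.1, π₂.2.1]
    · rw [Measure.map_add _ _ measurable_snd, Measure.map_smul, Measure.map_smul,
        π₁.2.2, π₂.2.2, ← add_smul, add_tsub_cancel_of_le ht.le, one_smul]
  refine (iInf₂_le (f := fun (π : Measure (ℝ × ℝ)) (_ : IsCoupling π _ ρ) =>
    ∫⁻ p, (‖p.1 - p.2‖₊ : ℝ≥0∞) ^ 2 ∂π) _ hc).trans ?_
  rw [lintegral_add_measure, lintegral_smul_measure, lintegral_smul_measure]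
  exact le_rfl

lemma meas_W2 {d : ℕ} {K : Set (Ed d)} (hK : IsCompact K) (μ ν : ProbabilityMeasure (Ed d))
    (hμ : μ.toMeasure Kᶜ = 0) (hν : ν.toMeasure Kᶜ = 0) :
    Measurable fun θ : sphere (0 : Ed d) 1 =>
      W2sq (pm μ θ).toMeasure (pm ν θ).toMeasure := by
  obtain ⟨R, hR⟩ := exists_box hK
  exact (W2_lsc (isCompact_Icc (a := -R) (b := R)) (fun θ : sphere (0 : Ed d) 1 => pm μ θ)
    (fun θ : sphere (0 : Ed d) 1 => pm ν θ)
    ((pm_cont_right μ).comp continuous_subtype_val)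
    ((pm_cont_right ν).comp continuous_subtype_val) (hR μ hμ) (hR ν hν)).measurable

lemma unif_le (d : ℕ) : unifSphere d Set.univ ≤ 1 := by
  simp only [unifSphere, Measure.smul_apply, smul_eq_mul]
  exact ENNReal.inv_mul_le_one _

lemma SW_ne_top {d : ℕ} {K : Set (Ed d)} (hK : IsCompact K) (μ ν : ProbabilityMeasure (Ed d))
    (hμ : μ.toMeasure Kᶜ = 0) (hν : ν.toMeasure Kᶜ = 0) :
    SW2sq μ.toMeasure ν.toMeasure ≠ ∞ := by
  obtain ⟨R, hR⟩ := exists_box hK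
  have : SW2sq μ.toMeasure ν.toMeasure ≤
      ∫⁻ _ : sphere (0 : Ed d) 1, ENNReal.ofReal ((2 * R) ^ 2) ∂(unifSphere d) :=
    lintegral_mono fun θ => W2_bound (μ := (pm μ θ).toMeasure) (ν := (pm ν θ).toMeasure)
      (hR μ hμ θ) (hR ν hν θ)
  refine ne_top_of_le_ne_top ?_ this
  rw [lintegral_const]
  exact ENNReal.mul_ne_top ENNReal.ofReal_ne_top
    (ne_top_of_le_ne_top ENNReal.one_ne_top (unif_le d))

lemma SW_lsc {d : ℕ} {K : Set (Ed d)} (hK : IsCompact K) (ν : ProbabilityMeasure (Ed d))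
    (hν : ν.toMeasure Kᶜ = 0) :
    LowerSemicontinuous fun μ : {μ : ProbabilityMeasure (Ed d) | μ.toMeasure Kᶜ = 0} =>
      SW2sq μ.1.toMeasure ν.toMeasure := by
  obtain ⟨R, hR⟩ := exists_box hK
  rw [lowerSemicontinuous_iff_le_liminf]
  intro μ
  refine le_trans ?_ (lintegral_liminf_le (fun μ' => meas_W2 hK μ'.1 ν μ'.2 hν))
  refine lintegral_mono fun θ => ?_
  have := W2_lsc (isCompact_Icc (a := -R) (b := R))
    (fun μ : {μ : ProbabilityMeasure (Ed d) | μ.toMeasure Kᶜ = 0} => pm μ.1 θ)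
    (fun _ => pm ν θ) ((pm_cont_left _).comp continuous_subtype_val) continuous_const
    (fun μ => hR _ μ.2 θ) (fun _ => hR ν hν θ)
  exact this.le_liminf μ

lemma SW_convex {d : ℕ} {K : Set (Ed d)} (hK : IsCompact K) {t : ℝ≥0} (ht0 : 0 < t) (ht : t < 1)
    (μ ν σ ρ : ProbabilityMeasure (Ed d))
    (hμ : μ.toMeasure Kᶜ = 0) (hν : ν.toMeasure Kᶜ = 0) (hρ : ρ.toMeasure Kᶜ = 0)
    (hσ : σ.toMeasure = t • μ.toMeasure + (1 - t) • ν.toMeasure) :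
    SW2sq σ.toMeasure ρ.toMeasure ≤
      t * SW2sq μ.toMeasure ρ.toMeasure + (1 - t : ℝ≥0) * SW2sq ν.toMeasure ρ.toMeasure := by
  have m1 := meas_W2 hK μ ρ hμ hρ
  have m2 := meas_W2 hK ν ρ hν hρ
  unfold SW2sq
  erw [← lintegral_const_mul _ m1, ← lintegral_const_mul _ m2,
    ← lintegral_add_left (m1.const_mul _)]
  refine lintegral_mono fun θ => ?_
  rw [hσ, Measure.map_add _ _ (continuous_proj _).measurable, Measure.map_smul, Measure.map_smul]
  exact W2_convex ht0 ht

/-- For K compact, F lower semicontinuous and strictly convex, τ > 0 and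
μ_k ∈ P_2(K), the SW-JKO step has a unique minimizer over P_2(K). -/
theorem swjko_step_unique_minimizer_of_strictly_convex (d : ℕ) (K : Set (Ed d))
    (hK : IsCompact K)
    (F : ProbabilityMeasure (Ed d) → ℝ)
    (hFlsc : LowerSemicontinuousOn F {μ : ProbabilityMeasure (Ed d) | MemP2 K μ.toMeasure})
    (hFsconv : ∀ (t : ℝ≥0), 0 < t → t < 1 → ∀ μ ν σ : ProbabilityMeasure (Ed d), μ ≠ ν →
      σ.toMeasure = t • μ.toMeasure + (1 - t) • ν.toMeasure →
      F σ < (t : ℝ) * F μ + (1 - (t : ℝ)) * F ν)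
    (τ : ℝ) (hτ : 0 < τ)
    (μk : ProbabilityMeasure (Ed d)) (hμk : MemP2 K μk.toMeasure) :
    ∃! μ : ProbabilityMeasure (Ed d), MemP2 K μ.toMeasure ∧
      ∀ ν : ProbabilityMeasure (Ed d), MemP2 K ν.toMeasure →
        (SW2sq μ.toMeasure μk.toMeasure).toReal / (2 * τ) + F μ ≤
          (SW2sq ν.toMeasure μk.toMeasure).toReal / (2 * τ) + F ν := by
  have hS : {μ : ProbabilityMeasure (Ed d) | MemP2 K μ.toMeasure} =
      {μ : ProbabilityMeasure (Ed d) | μ.toMeasure Kᶜ = 0} := by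
    ext μ
    refine ⟨fun h => h.2.1, fun h => ⟨inferInstance, h, ?_⟩⟩
    obtain ⟨R, hR⟩ := hK.exists_bound_of_continuousOn (f := fun x => x) continuousOn_id
    have : ∀ᵐ x ∂μ.toMeasure, (‖x‖₊ : ℝ≥0∞) ^ 2 ≤ (ENNReal.ofReal R) ^ 2 := by
      have : ∀ᵐ x ∂μ.toMeasure, x ∈ K := h
      filter_upwards [this] with x hx
      have h1 : (‖x‖₊ : ℝ≥0∞) = ENNReal.ofReal ‖x‖ := (ofReal_norm_eq_enorm _).symm
      rw [h1]
      gcongr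
      exact hR x hx
    refine (lintegral_mono_ae this).trans_lt ?_
    simp
  have hmem : ∀ μ : ProbabilityMeasure (Ed d), MemP2 K μ.toMeasure ↔ μ.toMeasure Kᶜ = 0 :=
    fun μ => Set.ext_iff.1 hS μ
  rw [hS] at hFlsc
  simp only [hmem] at hμk ⊢
  have hGlsc : LowerSemicontinuousOn
      (fun μ : ProbabilityMeasure (Ed d) => (SW2sq μ.toMeasure μk.toMeasure).toReal / (2 * τ))
      {μ : ProbabilityMeasure (Ed d) | μ.toMeasure Kᶜ = 0} := by
    rw [← lowerSemicontinuous_restrict_iff]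
    intro μ a ha
    have ha' : a * (2 * τ) < (SW2sq μ.1.toMeasure μk.toMeasure).toReal :=
      (lt_div_iff₀ (by positivity)).1 ha
    rcases lt_or_ge a 0 with h0 | h0
    · exact Eventually.of_forall fun ν => h0.trans_le (by dsimp; positivity)
    · have h2 := SW_lsc hK μk hμk μ (ENNReal.ofReal (a * (2 * τ)))
        ((ENNReal.ofReal_lt_iff_lt_toReal (by positivity) (SW_ne_top hK _ _ μ.2 hμk)).2 ha')
      filter_upwards [h2] with ν hν
      exact (lt_div_iff₀ (by positivity)).2
        ((ENNReal.ofReal_lt_iff_lt_toReal (by positivity) (SW_ne_top hK _ _ ν.2 hμk)).1 hν)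
  obtain ⟨μ, hμ, hmin⟩ := LowerSemicontinuousOn.exists_isMinOn ⟨μk, hμk⟩ (isCompact_supp hK)
    (hGlsc.add hFlsc)
  rw [isMinOn_iff] at hmin
  refine ⟨μ, ⟨hμ, fun ν hν => hmin ν hν⟩, ?_⟩
  rintro ν ⟨hν, hνmin⟩
  by_contra hne
  let t : ℝ≥0 := 1 / 2
  have ht0 : 0 < t := by simp [t]
  have ht1 : t < 1 := by
    rw [← NNReal.coe_lt_coe]; norm_num [t]
  have ht' : ((1 - t : ℝ≥0) : ℝ) = 1 - (t : ℝ) := NNReal.coe_sub ht1.le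
  have hp : IsProbabilityMeasure (t • ν.toMeasure + (1 - t) • μ.toMeasure) := by
    constructor
    simp only [Measure.add_apply, Measure.smul_apply, measure_univ]
    change (t : ℝ≥0∞) * 1 + ((1 - t : ℝ≥0) : ℝ≥0∞) * 1 = 1
    rw [mul_one, mul_one, ← ENNReal.coe_add, add_tsub_cancel_of_le ht1.le, ENNReal.coe_one]
  let σ : ProbabilityMeasure (Ed d) := ⟨_, hp⟩
  have hσ : σ.toMeasure = t • ν.toMeasure + (1 - t) • μ.toMeasure := rfl
  have hσK : σ.toMeasure Kᶜ = 0 := by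
    have hμ' : μ.toMeasure Kᶜ = 0 := hμ
    rw [hσ]; simp [hμ', hν]
  have hF := hFsconv t ht0 ht1 ν μ σ hne hσ
  have hSW := SW_convex hK ht0 ht1 ν μ σ μk hν hμ hμk hσ
  have n1 := SW_ne_top hK ν μk hν hμk
  have n2 := SW_ne_top hK μ μk hμ hμk
  have hSW' := ENNReal.toReal_mono (ENNReal.add_ne_top.2
    ⟨ENNReal.mul_ne_top ENNReal.coe_ne_top n1, ENNReal.mul_ne_top ENNReal.coe_ne_top n2⟩) hSW
  rw [ENNReal.toReal_add (ENNReal.mul_ne_top ENNReal.coe_ne_top n1)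
    (ENNReal.mul_ne_top ENNReal.coe_ne_top n2), ENNReal.toReal_mul, ENNReal.toReal_mul,
    ENNReal.coe_toReal, ENNReal.coe_toReal, ht'] at hSW'
  have e1 := hmin σ hσK
  have e2 := hmin ν hν
  have e3 := hνmin μ hμ
  have e4 := div_le_div_of_nonneg_right hSW' (by positivity : (0 : ℝ) ≤ 2 * τ)
  rw [add_div, mul_div_assoc, mul_div_assoc] at e4
  have htv : (t : ℝ) = 1 / 2 := by simp [t]
  rw [htv] at e4 hF
  linarith
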